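/- Let G be a finite nilpotent group with rank(G) = r, and let k be a natural number with k ≥ r. Then φ_k(G) ≥ 1 − ∑_{p | |G|} 1/(p^{k−r}(p − 1)), the sum ranging over the distinct prime divisors p of |G|. -/

import Mathlib

/-- `genProb G k` is the probability that `k` independently and uniformly chosen random
elements of the finite group `G` generate `G`, i.e. the number of `k`-tuples whose generated
subgroup is all of `G`, divided by `|G|^k`. -/
noncomputable def genProb (G : Type*) [Group G] (k : ℕ) : ℝ :=
  (Nat.card {v : Fin k → G // Subgroup.closure (Set.range v) = ⊤} : ℝ) /
    (Nat.card G : ℝ) ^ k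

/-!
A `k`-tuple fails to generate `G` exactly when its entries lie in a common maximal subgroup, and
they lie in a given `M` with probability `[G : M]⁻ᵏ`. The maximal subgroups of a nilpotent group are
normal of prime index. Each normal subgroup `N` of index `p` is the kernel of at least `p - 1`
homomorphisms `G → ℤ/pℤ`, obtained from one of them by composing with the automorphisms of `ℤ/pℤ`,
while there are at most `pʳ` homomorphisms in all, each being determined by the images of `r`
generators of `G`. So `G` has at most `pʳ / (p - 1)` maximal subgroups of index `p`, and the union
bound over the maximal subgroups gives the claim.
-/

section GeneratingTuples

variable (G : Type*) [Group G] [Finite G] {S : Finset (Subgroup G)}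

theorem card_pow_le_card_generating_add_sum_card_pow (hS : ∀ M, IsCoatom M → M ∈ S) (k : ℕ) :
    Nat.card G ^ k ≤ Nat.card {v : Fin k → G // Subgroup.closure (Set.range v) = ⊤} +
      ∑ M ∈ S, Nat.card M ^ k := by
  let generating : Set (Fin k → G) := {v | Subgroup.closure (Set.range v) = ⊤}
  let tuplesIn (M : Subgroup G) : Set (Fin k → G) := {v | ∀ i, v i ∈ M}
  have card_tuplesIn (M : Subgroup G) : (tuplesIn M).ncard = Nat.card M ^ k := by
    let e : tuplesIn M ≃ (Fin k → M) := Equiv.subtypePiEquivPi (p := fun _ x => x ∈ M)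
    rw [← Nat.card_coe_set_eq, Nat.card_congr e, Nat.card_fun, Nat.card_fin]
  have cover : Set.univ ⊆ generating ∪ ⋃ M ∈ S, tuplesIn M := fun v _ => by
    refine (eq_top_or_exists_le_coatom (Subgroup.closure (Set.range v))).imp_right ?_
    rintro ⟨M, hM, hle⟩
    exact Set.mem_iUnion₂.mpr ⟨M, hS M hM, fun i => hle (Subgroup.subset_closure ⟨i, rfl⟩)⟩
  calc Nat.card G ^ k = (Set.univ : Set (Fin k → G)).ncard := by
        rw [Set.ncard_univ, Nat.card_fun, Nat.card_fin]
    _ ≤ (generating ∪ ⋃ M ∈ S, tuplesIn M).ncard := Set.ncard_le_ncard cover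
    _ ≤ generating.ncard + (⋃ M ∈ S, tuplesIn M).ncard := Set.ncard_union_le _ _
    _ ≤ generating.ncard + ∑ M ∈ S, (tuplesIn M).ncard := by
        gcongr
        exact Finset.set_ncard_biUnion_le _ _
    _ = Nat.card {v : Fin k → G // Subgroup.closure (Set.range v) = ⊤} +
        ∑ M ∈ S, Nat.card M ^ k := by simp only [card_tuplesIn]; rfl

theorem one_sub_sum_inv_index_pow_le_genProb (hS : ∀ M, IsCoatom M → M ∈ S) (k : ℕ) :
    1 - ∑ M ∈ S, ((M.index : ℝ) ^ k)⁻¹ ≤ genProb G k := by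
  have card_pos : (0 : ℝ) < Nat.card G := by exact_mod_cast Nat.card_pos
  have inv_index_pow (M : Subgroup G) :
      ((M.index : ℝ) ^ k)⁻¹ = (Nat.card M : ℝ) ^ k / (Nat.card G : ℝ) ^ k := by
    have : (Nat.card M : ℝ) ≠ 0 := by exact_mod_cast Nat.card_pos.ne'
    rw [← M.card_mul_index, Nat.cast_mul, mul_pow]
    field_simp
  simp only [inv_index_pow]
  rw [sub_le_iff_le_add, genProb, ← Finset.sum_div, ← add_div, one_le_div (by positivity)]
  exact_mod_cast card_pow_le_card_generating_add_sum_card_pow G hS k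

end GeneratingTuples

section MaximalSubgroups

variable {G : Type*} [Group G] {M : Subgroup G}

theorem isSimpleGroup_quotient_of_isCoatom [M.Normal] (hM : IsCoatom M) :
    IsSimpleGroup (G ⧸ M) := by
  have : IsSimpleOrder (Set.Ici M) := Set.isSimpleOrder_Ici_iff_isCoatom.mpr hM
  let e : Subgroup (G ⧸ M) ≃o Set.Ici M := QuotientGroup.comapMk'OrderIso M
  have : IsSimpleOrder (Subgroup (G ⧸ M)) := e.isSimpleOrder_iff.mpr this
  have : Nontrivial (G ⧸ M) := QuotientGroup.nontrivial_iff.mpr hM.1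
  exact ⟨fun N _ => eq_bot_or_eq_top N⟩

theorem normal_and_index_prime_of_isCoatom [Group.IsNilpotent G] (hM : IsCoatom M) :
    M.Normal ∧ M.index.Prime := by
  have normal : M.Normal :=
    Subgroup.NormalizerCondition.normal_of_coatom M Group.normalizerCondition_of_isNilpotent hM
  have : IsSimpleGroup (G ⧸ M) := isSimpleGroup_quotient_of_isCoatom hM
  exact ⟨normal, IsSimpleGroup.prime_card⟩

end MaximalSubgroups

section CountingNormalSubgroups

theorem nonempty_monoidHom_embedding_fun_rank (G H : Type*) [Group G] [Group.FG G] [Group H] :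
    Nonempty ((G →* H) ↪ (Fin (Group.rank G) → H)) := by
  obtain ⟨S, card_S, closure_S⟩ := Group.rank_spec G
  let g := (S.equivFinOfCardEq card_S).symm
  refine ⟨⟨fun f i => f (g i), fun f₁ f₂ h => MonoidHom.eq_of_eqOn_dense closure_S ?_⟩⟩
  intro s hs
  obtain ⟨i, hi⟩ := g.surjective ⟨s, hs⟩
  simpa only [hi] using congrFun h i

theorem card_kernels_mul_card_mulAut_le {G H : Type*} [Group G] [Group H] [Finite (G →* H)]
    {S : Finset (Subgroup G)} (hS : ∀ N ∈ S, ∃ f : G →* H, Function.Surjective f ∧ f.ker = N) :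
    S.card * Nat.card (MulAut H) ≤ Nat.card (G →* H) := by
  choose f f_surjective ker_f using fun N : S => hS N N.2
  let twist : S × MulAut H → (G →* H) := fun x => x.2.toMonoidHom.comp (f x.1)
  have ker_twist (x : S × MulAut H) : (twist x).ker = x.1 :=
    (MonoidHom.ker_mulEquiv_comp (f x.1) x.2).trans (ker_f x.1)
  have twist_injective : Function.Injective twist := by
    rintro ⟨N, σ⟩ ⟨N', τ⟩ h
    obtain rfl : N = N' := Subtype.ext <| by rw [← ker_twist (N, σ), h, ker_twist]
    refine Prod.ext rfl (MulEquiv.ext fun y => ?_)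
    obtain ⟨x, rfl⟩ := f_surjective N y
    exact DFunLike.congr_fun h x
  rw [← Nat.card_eq_finsetCard, ← Nat.card_prod]
  exact Nat.card_le_card_of_injective twist twist_injective

variable {G : Type*} [Group G]

theorem exists_surjective_ker_eq_of_index_prime {p : ℕ} [Fact p.Prime] {N : Subgroup G}
    [N.Normal] (hN : N.index = p) :
    ∃ f : G →* Multiplicative (ZMod p), Function.Surjective f ∧ f.ker = N := by
  let e : G ⧸ N ≃* Multiplicative (ZMod p) := mulEquivOfPrimeCardEq (p := p) hN (by simp)
  refine ⟨e.toMonoidHom.comp (QuotientGroup.mk' N),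
    e.surjective.comp (QuotientGroup.mk'_surjective N), ?_⟩
  exact (MonoidHom.ker_mulEquiv_comp _ e).trans (QuotientGroup.ker_mk' N)

variable [Group.FG G] {S : Finset (Subgroup G)}

theorem card_mul_pred_le_pow_rank_of_normal_of_index_eq {p : ℕ} (hp : p.Prime)
    (normal : ∀ N ∈ S, N.Normal) (index_eq : ∀ N ∈ S, N.index = p) :
    S.card * (p - 1) ≤ p ^ Group.rank G := by
  have : Fact p.Prime := ⟨hp⟩
  obtain ⟨e⟩ := nonempty_monoidHom_embedding_fun_rank G (Multiplicative (ZMod p))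
  have : Finite (G →* Multiplicative (ZMod p)) := .of_injective e e.injective
  have card_zmod : Nat.card (Multiplicative (ZMod p)) = p := by
    rw [Nat.card_congr Multiplicative.toAdd, Nat.card_zmod]
  calc S.card * (p - 1) = S.card * Nat.card (MulAut (Multiplicative (ZMod p))) := by
        rw [IsCyclic.card_mulAut, card_zmod, Nat.totient_prime hp]
    _ ≤ Nat.card (G →* Multiplicative (ZMod p)) := card_kernels_mul_card_mulAut_le fun N hN =>
        have := normal N hN
        exists_surjective_ker_eq_of_index_prime (index_eq N hN)
    _ ≤ Nat.card (Fin (Group.rank G) → Multiplicative (ZMod p)) :=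
        Nat.card_le_card_of_injective e e.injective
    _ = p ^ Group.rank G := by rw [Nat.card_fun, card_zmod, Nat.card_fin]

theorem card_mul_inv_pow_le_of_normal_of_index_eq {p : ℕ} (hp : p.Prime)
    (normal : ∀ N ∈ S, N.Normal) (index_eq : ∀ N ∈ S, N.index = p) {k : ℕ}
    (hk : Group.rank G ≤ k) :
    S.card * ((p : ℝ) ^ k)⁻¹ ≤ 1 / ((p : ℝ) ^ (k - Group.rank G) * ((p : ℝ) - 1)) := by
  have p_pos : (0 : ℝ) < p := by exact_mod_cast hp.pos
  have pred_pos : (0 : ℝ) < (p : ℝ) - 1 := sub_pos.mpr (by exact_mod_cast hp.one_lt)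
  have count : S.card * ((p : ℝ) - 1) ≤ (p : ℝ) ^ Group.rank G := by
    have := card_mul_pred_le_pow_rank_of_normal_of_index_eq hp normal index_eq
    rw [← Nat.cast_pred hp.pos]
    exact_mod_cast this
  calc S.card * ((p : ℝ) ^ k)⁻¹ ≤ (p : ℝ) ^ Group.rank G / ((p : ℝ) - 1) * ((p : ℝ) ^ k)⁻¹ := by
        gcongr
        exact (le_div_iff₀ pred_pos).mpr count
    _ = 1 / ((p : ℝ) ^ (k - Group.rank G) * ((p : ℝ) - 1)) := by
        rw [pow_sub₀ _ p_pos.ne' hk]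
        field_simp

theorem sum_inv_index_pow_le_of_normal_of_index_prime (normal : ∀ N ∈ S, N.Normal) {P : Finset ℕ}
    (hP : ∀ p ∈ P, p.Prime) (index_mem : ∀ N ∈ S, N.index ∈ P) {k : ℕ} (hk : Group.rank G ≤ k) :
    ∑ N ∈ S, ((N.index : ℝ) ^ k)⁻¹ ≤
      ∑ p ∈ P, 1 / ((p : ℝ) ^ (k - Group.rank G) * ((p : ℝ) - 1)) := by
  rw [← Finset.sum_fiberwise_of_maps_to index_mem]
  refine Finset.sum_le_sum fun p hp => ?_
  calc ∑ N ∈ S with N.index = p, ((N.index : ℝ) ^ k)⁻¹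
      = ∑ N ∈ S with N.index = p, ((p : ℝ) ^ k)⁻¹ :=
        Finset.sum_congr rfl fun N hN => by rw [(Finset.mem_filter.mp hN).2]
    _ = (S.filter (·.index = p)).card * ((p : ℝ) ^ k)⁻¹ := by
        rw [Finset.sum_const, nsmul_eq_mul]
    _ ≤ 1 / ((p : ℝ) ^ (k - Group.rank G) * ((p : ℝ) - 1)) :=
        card_mul_inv_pow_le_of_normal_of_index_eq (hP p hp)
          (fun N hN => normal N (Finset.mem_filter.mp hN).1)
          (fun N hN => (Finset.mem_filter.mp hN).2) hk

end CountingNormalSubgroups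

theorem genProb_nilpotent_sum_lower_bound (G : Type*) [Group G] [Finite G]
    [Group.IsNilpotent G] (r : ℕ) (hr : Group.rank G = r) (k : ℕ) (hk : r ≤ k) :
    1 - ∑ p ∈ (Nat.card G).primeFactors, 1 / ((p : ℝ) ^ (k - r) * ((p : ℝ) - 1)) ≤
      genProb G k := by
  subst hr
  let S : Finset (Subgroup G) := (Set.toFinite {M : Subgroup G | IsCoatom M}).toFinset
  have mem_S {M : Subgroup G} : M ∈ S ↔ IsCoatom M := Set.Finite.mem_toFinset _
  have normal (M) (hM : M ∈ S) : M.Normal :=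
    (normal_and_index_prime_of_isCoatom (mem_S.mp hM)).1
  have index_mem (M) (hM : M ∈ S) : M.index ∈ (Nat.card G).primeFactors :=
    Nat.mem_primeFactors.mpr ⟨(normal_and_index_prime_of_isCoatom (mem_S.mp hM)).2,
      M.index_dvd_card, Nat.card_pos.ne'⟩
  calc 1 - ∑ p ∈ (Nat.card G).primeFactors,
          1 / ((p : ℝ) ^ (k - Group.rank G) * ((p : ℝ) - 1))
      ≤ 1 - ∑ M ∈ S, ((M.index : ℝ) ^ k)⁻¹ := by
        gcongr 1 - ?_
        exact sum_inv_index_pow_le_of_normal_of_index_prime normal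
          (fun _ => Nat.prime_of_mem_primeFactors) index_mem hk
    _ ≤ genProb G k := one_sub_sum_inv_index_pow_le_genProb G (fun _ => mem_S.mpr) k
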